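/- Let R be a local complete intersection, w a positive integer, and M, N finitely generated R-modules with M satisfying Serre's condition (S_w) and Tor_i^R(M,N) of finite length for all i ≫ 0. Then for every non-maximal prime ideal p of R with height(p) ≤ w, Tor_i^R(M,N)_p = 0 for all i ≥ 1. -/

import Mathlib

open RingTheory.Sequence CategoryTheory

universe u

noncomputable section

/-- Depth of a module: supremum of lengths of weakly regular sequences consisting of nonunits.
For a f.g. module over a noetherian local ring this is the usual depth, and the zero module
has depth `⊤`. -/
def rdepth (A : Type u) [CommRing A] (M : Type u) [AddCommGroup M] [Module A M] : ℕ∞ :=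
  sSup {n : ℕ∞ | ∃ rs : List A, (rs.length : ℕ∞) = n ∧ (∀ r ∈ rs, r ∈ nonunits A) ∧
    RingTheory.Sequence.IsWeaklyRegular M rs}

/-- Serre's condition `(S_n)`. -/
def SerreCond (R : Type u) [CommRing R] (M : Type u) [AddCommGroup M] [Module R M] (n : ℕ) :
    Prop :=
  ∀ (p : Ideal R) (hp : p.IsPrime), Nontrivial (LocalizedModule p.primeCompl M) →
    min (n : ℕ∞) (Order.height (⟨p, hp⟩ : PrimeSpectrum R)) ≤
      rdepth (Localization.AtPrime p) (LocalizedModule p.primeCompl M)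

/-- `Tor_i^R(M, N)` as an object of `ModuleCat R`. -/
def TorModCat (R : Type u) [CommRing R] (i : ℕ) (M N : Type u) [AddCommGroup M] [Module R M]
    [AddCommGroup N] [Module R N] : ModuleCat.{u} R :=
  ((Tor (ModuleCat.{u} R) i).obj (ModuleCat.of R M)).obj (ModuleCat.of R N)

/-- `Tor_i^R(M, N)` as a type (with its `R`-module structure given by instances below). -/
def TorM (R : Type u) [CommRing R] (i : ℕ) (M N : Type u) [AddCommGroup M] [Module R M]
    [AddCommGroup N] [Module R N] : Type u :=
  TorModCat R i M N

instance (R : Type u) [CommRing R] (i : ℕ) (M N : Type u) [AddCommGroup M] [Module R M]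
    [AddCommGroup N] [Module R N] : AddCommGroup (TorM R i M N) :=
  inferInstanceAs (AddCommGroup (TorModCat R i M N))

instance (R : Type u) [CommRing R] (i : ℕ) (M N : Type u) [AddCommGroup M] [Module R M]
    [AddCommGroup N] [Module R N] : Module R (TorM R i M N) :=
  inferInstanceAs (Module R (TorModCat R i M N))

/-- A regular local ring: noetherian local, whose maximal ideal is generated by a
(weakly) regular sequence. -/
def IsRegLocal (Q : Type u) [CommRing Q] : Prop :=
  IsNoetherianRing Q ∧ IsLocalRing Q ∧
    ∃ rs : List Q, RingTheory.Sequence.IsWeaklyRegular Q rs ∧ (∀ r ∈ rs, r ∈ nonunits Q) ∧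
      Ideal.span {x | x ∈ rs} = Ideal.span (nonunits Q)

/-- A (local) complete intersection: noetherian local ring whose completion is a regular
local ring modulo a regular sequence (of nonunits). -/
def IsCIRing (R : Type u) [CommRing R] : Prop :=
  IsNoetherianRing R ∧ IsLocalRing R ∧
    ∃ (Q : Type u) (_ : CommRing Q), IsRegLocal Q ∧
      ∃ rs : List Q, (∀ r ∈ rs, r ∈ nonunits Q) ∧ RingTheory.Sequence.IsWeaklyRegular Q rs ∧
        Nonempty ((Q ⧸ Ideal.span {x | x ∈ rs}) ≃+* AdicCompletion (Ideal.span (nonunits R)) R)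

/-- A hypersurface: noetherian local ring whose completion is a regular local ring modulo
a single non-zerodivisor in the maximal ideal. -/
def IsHypersurfaceRing (R : Type u) [CommRing R] : Prop :=
  IsNoetherianRing R ∧ IsLocalRing R ∧
    ∃ (Q : Type u) (_ : CommRing Q), IsRegLocal Q ∧
      ∃ f : Q, f ∈ nonunits Q ∧ f ∈ nonZeroDivisors Q ∧
        Nonempty ((Q ⧸ Ideal.span {f}) ≃+* AdicCompletion (Ideal.span (nonunits R)) R)

/-- Maximal Cohen-Macaulay module over a local ring: depth equals the Krull dimension. -/
def IsMCM (R : Type u) [CommRing R] (M : Type u) [AddCommGroup M] [Module R M] : Prop :=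
  (rdepth R M : WithBot ℕ∞) = ringKrullDim R

/-- Cohen-Macaulay local ring. -/
def IsCMLocalRing (A : Type u) [CommRing A] : Prop :=
  IsNoetherianRing A ∧ IsLocalRing A ∧ (rdepth A A : WithBot ℕ∞) = ringKrullDim A

/-- `M` has (constant) rank: free of the same rank at every minimal prime. -/
def HasRank (R : Type u) [CommRing R] (M : Type u) [AddCommGroup M] [Module R M] : Prop :=
  ∃ r : ℕ, ∀ (p : Ideal R) (hp : p.IsPrime), p ∈ minimalPrimes R →
    Nonempty ((LocalizedModule (@Ideal.primeCompl R _ p hp) M)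
      ≃ₗ[Localization (@Ideal.primeCompl R _ p hp)]
      (Fin r → Localization (@Ideal.primeCompl R _ p hp)))

/-- Projective dimension at most `n`. -/
def pdLE (R : Type u) [CommRing R] : ℕ → ∀ (M : Type u) [AddCommGroup M] [Module R M], Prop
  | 0, M, _, _ => Module.Projective R M
  | n+1, M, _, _ => ∃ (P : Type u) (_ : AddCommGroup P) (_ : Module R P),
      Module.Projective R P ∧ ∃ f : P →ₗ[R] M, Function.Surjective f ∧
        pdLE R n (LinearMap.ker f)

/-- Injective dimension at most `n`. -/
def idLE (R : Type u) [CommRing R] : ℕ → ∀ (M : Type u) [AddCommGroup M] [Module R M], Prop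
  | 0, M, _, _ => Module.Injective R M
  | n+1, M, _, _ => ∃ (I : Type u) (_ : AddCommGroup I) (_ : Module R I),
      Module.Injective R I ∧ ∃ f : M →ₗ[R] I, Function.Injective f ∧
        idLE R n (I ⧸ LinearMap.range f)

/-- Gorenstein local ring: noetherian local with finite self-injective dimension. -/
def IsGorensteinLocalRing (R : Type u) [CommRing R] : Prop :=
  IsNoetherianRing R ∧ IsLocalRing R ∧ ∃ n : ℕ, idLE R n R

/-- The map `M → R^ν` obtained from a free cover `ε : R^ν ↠ M^*` by dualizing and composing
with the biduality map; its cokernel is the pushforward `M₁`. -/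
def pushMap (R M : Type u) [CommRing R] [AddCommGroup M] [Module R M] {ν : ℕ}
    (ε : (Fin ν → R) →ₗ[R] Module.Dual R M) : M →ₗ[R] (Fin ν → R) where
  toFun m := fun i => ε (Pi.single i 1) m
  map_add' x y := by funext i; simp
  map_smul' r x := by funext i; simp

/-- Length of a module, as the Krull dimension of its lattice of submodules. -/
def mlen (R : Type u) [CommRing R] (M : Type u) [AddCommGroup M] [Module R M] :
    WithBot ℕ∞ :=
  Order.krullDim (Submodule R M)

/-- An unramified regular local ring: equicharacteristic (contains a field), or of mixed
characteristic `(0, p)` with `p` not in the square of the maximal ideal. -/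
def IsUnramifiedRegLocal (Q : Type u) [CommRing Q] : Prop :=
  IsRegLocal Q ∧
    ((∃ (K : Type u) (_ : Field K), Nonempty (K →+* Q)) ∨
     (CharZero Q ∧ ∃ p : ℕ, p.Prime ∧ (p : Q) ∈ nonunits Q ∧
        (p : Q) ∉ (Ideal.span (nonunits Q)) ^ 2))

/-! Let `A = S / (f)` with `f` regular on `S`, and let `0 → K → F → M → 0` be an `S`-free
presentation of an `A`-module `M`. Tensoring with `A` gives the exact sequence
`0 → M → A ⊗ K → A ⊗ F → M → 0`, and `Tor^A(A ⊗ K, N)` is `Tor^S(M, N)` shifted by one. Hence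
eventual vanishing over `A` goes up to `S`, and vanishing over `S` together with eventual vanishing
over `A` descends by induction to `A`. If `S` has finite Tor-dimension, this dimension is at most
`dim S`, and a regular sequence of length `s` on `M` lowers the bound to `dim S - s`. Cutting `S`
down by a regular sequence of length `r` lowers it by `r` in turn: over a complete intersection of
dimension `d`, eventual vanishing forces `Tor_i(M, N) = 0` for all `i > d - depth M`, which is
Jorgensen's theorem. It is applied to `R_p`, where finite length makes the `Tor`s vanish eventually;
the presentation as a complete intersection is available on a localization of the completion of `R`,
which is faithfully flat over `R_p`. -/

/-! ### Vanishing of Tor through syzygies -/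

section TorVanishing

open TensorProduct LinearMap Function

variable {R : Type u} [CommRing R] {A B C D M N K F L P M₁ M₂ M₃ : Type u}
  [AddCommGroup A] [Module R A] [AddCommGroup B] [Module R B]
  [AddCommGroup C] [Module R C] [AddCommGroup D] [Module R D]
  [AddCommGroup M] [Module R M] [AddCommGroup N] [Module R N]
  [AddCommGroup K] [Module R K] [AddCommGroup F] [Module R F]
  [AddCommGroup L] [Module R L] [AddCommGroup P] [Module R P]
  [AddCommGroup M₁] [Module R M₁] [AddCommGroup M₂] [Module R M₂] [AddCommGroup M₃] [Module R M₃]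

lemma rTensor_lTensor_comm (f : A →ₗ[R] B) (g : C →ₗ[R] D) (z : A ⊗[R] C) :
    f.rTensor D (g.lTensor A z) = g.lTensor B (f.rTensor C z) := by
  rw [← LinearMap.comp_apply, rTensor_comp_lTensor, ← lTensor_comp_rTensor, LinearMap.comp_apply]

lemma rTensor_injective_of_lTensor_injective [Module.Flat R P]
    {f : A →ₗ[R] B} {g : B →ₗ[R] M} (hf : Injective f) (hfg : Exact f g) (hg : Surjective g)
    {l : L →ₗ[R] P} {q : P →ₗ[R] N} (hlq : Exact l q) (hq : Surjective q)
    (h : Injective (l.lTensor M)) : Injective (f.rTensor N) := by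
  rw [injective_iff_map_eq_zero]
  intro a ha
  obtain ⟨a, rfl⟩ := lTensor_surjective A hq a
  rw [rTensor_lTensor_comm] at ha
  obtain ⟨b, hb⟩ := (lTensor_exact B hlq hq _).1 ha
  have hgb : g.rTensor L b = 0 := by
    apply h
    rw [← rTensor_lTensor_comm, hb, map_zero, (rTensor_exact P hfg hg).apply_apply_eq_zero]
  obtain ⟨c, rfl⟩ := (rTensor_exact L hfg hg _).1 hgb
  rw [← rTensor_lTensor_comm] at hb
  rw [← Module.Flat.rTensor_preserves_injective_linearMap f hf hb,
    (lTensor_exact A hlq hq).apply_apply_eq_zero]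

variable (R) in
/-- The free cover of `M` on all of its elements. -/
abbrev canonicalCover (M : Type u) [AddCommGroup M] [Module R M] : (M →₀ R) →ₗ[R] M :=
  Finsupp.linearCombination R (id : M → M)

variable (R) in
/-- The first syzygy module of `M`, with respect to `canonicalCover R M`. -/
def CanonicalSyzygy (M : Type u) [AddCommGroup M] [Module R M] : Type u :=
  ker (canonicalCover R M)

instance : AddCommGroup (CanonicalSyzygy R M) :=
  inferInstanceAs (AddCommGroup (ker (canonicalCover R M)))

instance : Module R (CanonicalSyzygy R M) :=
  inferInstanceAs (Module R (ker (canonicalCover R M)))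

variable (R) in
/-- The inclusion of `CanonicalSyzygy R M` into the free module covering `M`. -/
def canonicalInclusion (M : Type u) [AddCommGroup M] [Module R M] :
    CanonicalSyzygy R M →ₗ[R] (M →₀ R) :=
  (ker (canonicalCover R M)).subtype

variable (R) in
lemma canonicalCover_surjective (M : Type u) [AddCommGroup M] [Module R M] :
    Surjective (canonicalCover R M) :=
  Finsupp.linearCombination_id_surjective R M

variable (R) in
lemma canonicalInclusion_injective (M : Type u) [AddCommGroup M] [Module R M] :
    Injective (canonicalInclusion R M) :=
  Submodule.injective_subtype _

variable (R) in
lemma canonicalInclusion_exact (M : Type u) [AddCommGroup M] [Module R M] :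
    Exact (canonicalInclusion R M) (canonicalCover R M) :=
  exact_subtype_ker_map _

variable (R) in
/-- `Tor_{i+1}(M, N) = 0`, expressed through the iterated syzygies of `M`. The index is shifted
because only the positive `Tor`s are recorded. -/
def TorVanishes : ℕ → ∀ (M N : Type u) [AddCommGroup M] [Module R M]
    [AddCommGroup N] [Module R N], Prop
  | 0, M, N, _, _, _, _ => Injective ((canonicalInclusion R M).rTensor N)
  | i + 1, M, N, _, _, _, _ => TorVanishes i (CanonicalSyzygy R M) N

namespace TorVanishes

lemma zero_of_lTensor_injective [Module.Flat R P] {l : L →ₗ[R] P} {q : P →ₗ[R] N}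
    (hlq : Exact l q) (hq : Surjective q) (h : Injective (l.lTensor M)) : TorVanishes R 0 M N :=
  rTensor_injective_of_lTensor_injective (canonicalInclusion_injective R M)
    (canonicalInclusion_exact R M) (canonicalCover_surjective R M) hlq hq h

lemma zero_symm (h : TorVanishes R 0 M N) : TorVanishes R 0 N M :=
  zero_of_lTensor_injective (canonicalInclusion_exact R M) (canonicalCover_surjective R M)
    ((lTensor_inj_iff_rTensor_inj _ _).2 h)

lemma rTensor_injective (h : TorVanishes R 0 M N) {f : A →ₗ[R] B} {g : B →ₗ[R] M}
    (hf : Injective f) (hfg : Exact f g) (hg : Surjective g) : Injective (f.rTensor N) :=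
  rTensor_injective_of_lTensor_injective hf hfg hg (canonicalInclusion_exact R N)
    (canonicalCover_surjective R N) ((lTensor_inj_iff_rTensor_inj _ _).2 h.zero_symm)

lemma zero_iff_lTensor_injective [Module.Flat R P] {l : L →ₗ[R] P} {q : P →ₗ[R] N}
    (hl : Injective l) (hlq : Exact l q) (hq : Surjective q) :
    TorVanishes R 0 M N ↔ Injective (l.lTensor M) :=
  ⟨fun h ↦ (lTensor_inj_iff_rTensor_inj _ _).2 (h.zero_symm.rTensor_injective hl hlq hq),
    zero_of_lTensor_injective hlq hq⟩

lemma zero_iff_rTensor_injective [Module.Flat R F] {k : K →ₗ[R] F} {q : F →ₗ[R] M}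
    (hk : Injective k) (hkq : Exact k q) (hq : Surjective q) :
    TorVanishes R 0 M N ↔ Injective (k.rTensor N) :=
  ⟨fun h ↦ h.rTensor_injective hk hkq hq, fun h ↦
    (zero_of_lTensor_injective hkq hq ((lTensor_inj_iff_rTensor_inj _ _).2 h)).zero_symm⟩

lemma syzygy_iff_syzygy (i : ℕ) [Module.Flat R F] [Module.Flat R P]
    {k : K →ₗ[R] F} {q : F →ₗ[R] M} (hk : Injective k) (hkq : Exact k q) (hq : Surjective q)
    {l : L →ₗ[R] P} {r : P →ₗ[R] N} (hl : Injective l) (hlr : Exact l r) (hr : Surjective r) :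
    TorVanishes R i K N ↔ TorVanishes R i M L := by
  induction i generalizing M N K F L P with
  | zero =>
    have hkP : Injective (k.rTensor P) :=
      Module.Flat.rTensor_preserves_injective_linearMap (M := P) k hk
    have hlF : Injective (l.lTensor F) :=
      Module.Flat.lTensor_preserves_injective_linearMap (M := F) l hl
    rw [zero_iff_lTensor_injective hl hlr hr, zero_iff_rTensor_injective hk hkq hq,
      ← hkP.of_comp_iff, ← hlF.of_comp_iff]
    exact iff_of_eq (congrArg Injective (funext (rTensor_lTensor_comm k l)))
  | succ i ih =>
    calc TorVanishes R i (CanonicalSyzygy R K) N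
      _ ↔ TorVanishes R i K L :=
        ih (canonicalInclusion_injective R K) (canonicalInclusion_exact R K)
          (canonicalCover_surjective R K) hl hlr hr
      _ ↔ TorVanishes R i M (CanonicalSyzygy R L) :=
        ih hk hkq hq (canonicalInclusion_injective R L) (canonicalInclusion_exact R L)
          (canonicalCover_surjective R L)
      _ ↔ TorVanishes R i (CanonicalSyzygy R M) L :=
        (ih (canonicalInclusion_injective R M) (canonicalInclusion_exact R M)
          (canonicalCover_surjective R M) (canonicalInclusion_injective R L)
          (canonicalInclusion_exact R L) (canonicalCover_surjective R L)).symm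

lemma succ_iff_right (i : ℕ) [Module.Flat R P] {l : L →ₗ[R] P} {q : P →ₗ[R] N}
    (hl : Injective l) (hlq : Exact l q) (hq : Surjective q) :
    TorVanishes R (i + 1) M N ↔ TorVanishes R i M L :=
  syzygy_iff_syzygy i (canonicalInclusion_injective R M) (canonicalInclusion_exact R M)
    (canonicalCover_surjective R M) hl hlq hq

lemma succ_iff_left (i : ℕ) [Module.Flat R F] {k : K →ₗ[R] F} {q : F →ₗ[R] M}
    (hk : Injective k) (hkq : Exact k q) (hq : Surjective q) :
    TorVanishes R (i + 1) M N ↔ TorVanishes R i K N := by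
  have hN := canonicalInclusion_exact R N
  rw [succ_iff_right i (canonicalInclusion_injective R N) hN (canonicalCover_surjective R N),
    syzygy_iff_syzygy i hk hkq hq (canonicalInclusion_injective R N) hN
      (canonicalCover_surjective R N)]

lemma symm {i : ℕ} (h : TorVanishes R i M N) : TorVanishes R i N M := by
  induction i generalizing M with
  | zero => exact h.zero_symm
  | succ i ih =>
    rw [succ_iff_right i (canonicalInclusion_injective R M) (canonicalInclusion_exact R M)
      (canonicalCover_surjective R M)]
    exact ih h

lemma of_flat_right (i : ℕ) [Module.Flat R N] : TorVanishes R i M N := by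
  induction i generalizing M with
  | zero =>
    exact Module.Flat.rTensor_preserves_injective_linearMap _ (canonicalInclusion_injective R M)
  | succ _ ih => exact ih

lemma of_flat_left (i : ℕ) [Module.Flat R M] : TorVanishes R i M N := (of_flat_right i).symm

variable (R) in
lemma exists_dimension_shift (i : ℕ) (N : Type u) [AddCommGroup N] [Module R N] :
    ∃ (N' : Type u) (_ : AddCommGroup N') (_ : Module R N'), ∀ (j : ℕ) (M : Type u)
      [AddCommGroup M] [Module R M], TorVanishes R (i + j) M N ↔ TorVanishes R j M N' := by
  induction i with
  | zero => exact ⟨N, _, _, fun j M _ _ ↦ by rw [zero_add]⟩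
  | succ i ih =>
    obtain ⟨N', _, _, h⟩ := ih
    refine ⟨CanonicalSyzygy R N', inferInstance, inferInstance, fun j M _ _ ↦ ?_⟩
    rw [add_assoc, add_comm 1 j, h, succ_iff_right j (canonicalInclusion_injective R N')
      (canonicalInclusion_exact R N') (canonicalCover_surjective R N')]

section ShortExact

variable {f : M₁ →ₗ[R] M₂} {g : M₂ →ₗ[R] M₃} {i : ℕ}

lemma of_exact_middle (hf : Injective f) (hfg : Exact f g) (hg : Surjective g)
    (h₁ : TorVanishes R i M₁ N) (h₃ : TorVanishes R i M₃ N) : TorVanishes R i M₂ N := by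
  obtain ⟨N', _, _, h⟩ := exists_dimension_shift R i N
  have hl := canonicalInclusion_injective R N'
  have hlq := canonicalInclusion_exact R N'
  have hq := canonicalCover_surjective R N'
  rw [← add_zero i, h, zero_iff_lTensor_injective hl hlq hq, injective_iff_map_eq_zero] at h₁ h₃ ⊢
  intro z hz
  obtain ⟨y, rfl⟩ := (rTensor_exact _ hfg hg z).1
    (h₃ _ (by rw [← rTensor_lTensor_comm, hz, map_zero]))
  rw [← rTensor_lTensor_comm] at hz
  rw [h₁ y (Module.Flat.rTensor_preserves_injective_linearMap f hf (by rw [hz, map_zero])),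
    map_zero]

lemma of_exact_left (hf : Injective f) (hfg : Exact f g) (hg : Surjective g)
    (h₂ : TorVanishes R i M₂ N) (h₃ : TorVanishes R (i + 1) M₃ N) : TorVanishes R i M₁ N := by
  obtain ⟨N', _, _, h⟩ := exists_dimension_shift R i N
  have hl := canonicalInclusion_injective R N'
  have hlq := canonicalInclusion_exact R N'
  have hq := canonicalCover_surjective R N'
  rw [h, succ_iff_right 0 hl hlq hq] at h₃
  rw [← add_zero i, h, zero_iff_lTensor_injective hl hlq hq, injective_iff_map_eq_zero] at h₂ ⊢
  intro z hz
  apply h₃.rTensor_injective hf hfg hg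
  rw [map_zero]
  exact h₂ _ (by rw [← rTensor_lTensor_comm, hz, map_zero])

lemma of_equiv (e : M₁ ≃ₗ[R] M₂) (h : TorVanishes R i M₁ N) : TorVanishes R i M₂ N :=
  of_exact_middle (f := e.toLinearMap) (g := (0 : M₂ →ₗ[R] PUnit.{u + 1})) e.injective
    (fun y ↦ iff_of_true rfl (e.surjective y)) (fun y ↦ ⟨0, Subsingleton.elim _ y⟩) h
    (of_flat_left i)

lemma of_exact_right (hf : Injective f) (hfg : Exact f g) (hg : Surjective g)
    (h₁ : TorVanishes R i M₁ N) (h₂ : TorVanishes R (i + 1) M₂ N) :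
    TorVanishes R (i + 1) M₃ N := by
  let q := canonicalCover R M₂
  have hq : Surjective q := canonicalCover_surjective R M₂
  let α : ker q →ₗ[R] ker (g ∘ₗ q) := Submodule.inclusion (ker_le_ker_comp q g)
  let β : ker (g ∘ₗ q) →ₗ[R] ker g := q.restrict fun _ hx ↦ hx
  have hαβ : Exact α β := fun x ↦
    ⟨fun hx ↦ ⟨⟨x, congrArg Subtype.val hx⟩, rfl⟩, by rintro ⟨y, rfl⟩; exact Subtype.ext y.2⟩
  have hβ : Surjective β := by
    rintro ⟨y, hy⟩
    obtain ⟨x, rfl⟩ := hq y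
    exact ⟨⟨x, hy⟩, rfl⟩
  have e : M₁ ≃ₗ[R] ker g :=
    LinearEquiv.ofInjective f hf ≪≫ₗ LinearEquiv.ofEq _ _ hfg.linearMap_ker_eq.symm
  rw [succ_iff_left i (Submodule.injective_subtype _) (exact_subtype_ker_map q) hq] at h₂
  rw [succ_iff_left i (Submodule.injective_subtype _) (exact_subtype_ker_map (g ∘ₗ q))
    (hg.comp hq)]
  exact of_exact_middle (Submodule.inclusion_injective _) hαβ hβ h₂ (h₁.of_equiv e)

end ShortExact

end TorVanishes

end TorVanishing

/-! ### Base change and hypersurfaces -/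

section BaseChange

open TensorProduct LinearMap Function

variable {S A : Type u} [CommRing S] [CommRing A] [Algebra S A] {K F M N : Type u}
  [AddCommGroup K] [Module S K] [AddCommGroup F] [Module S F] [AddCommGroup M] [Module S M]
  [AddCommGroup N] [Module S N]

lemma lTensor_baseChange_injective_iff [Module A N] [IsScalarTower S A N] (k : K →ₗ[S] F) :
    Injective ((k.baseChange A).lTensor N) ↔ Injective (k.lTensor N) := by
  let eK := AlgebraTensorModule.cancelBaseChange S A A N K
  let eF := AlgebraTensorModule.cancelBaseChange S A A N F
  have h : ∀ z, eF ((k.baseChange A).lTensor N z) = k.lTensor N (eK z) := by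
    intro z
    induction z with
    | zero => simp only [map_zero]
    | add x y hx hy => simp only [map_add, hx, hy]
    | tmul n y =>
      induction y with
      | zero => simp only [tmul_zero, map_zero]
      | add x y hx hy => simp only [map_add, tmul_add, hx, hy]
      | tmul a y => simp [eK, eF]
  rw [← eF.injective.of_comp_iff, ← Injective.of_comp_iff' (k.lTensor N) eK.bijective]
  exact iff_of_eq (congrArg Injective (funext h))

variable (A) in
lemma exact_baseChange {k : K →ₗ[S] F} {q : F →ₗ[S] M} (hkq : Exact k q) (hq : Surjective q) :
    Exact (k.baseChange A) (q.baseChange A) :=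
  lTensor_exact A hkq hq

namespace TorVanishes

lemma baseChange_injective (h : TorVanishes S 0 A M) {k : K →ₗ[S] F} {q : F →ₗ[S] M}
    (hk : Injective k) (hkq : Exact k q) (hq : Surjective q) : Injective (k.baseChange A) :=
  (lTensor_inj_iff_rTensor_inj A k).2 (h.symm.rTensor_injective hk hkq hq)

lemma iff_baseChange_left [Module A N] [IsScalarTower S A N] (i : ℕ)
    (hM : ∀ j, TorVanishes S j A M) : TorVanishes S i M N ↔ TorVanishes A i (A ⊗[S] M) N := by
  have hk (M : Type u) [AddCommGroup M] [Module S M] := canonicalInclusion_injective S M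
  have hkq (M : Type u) [AddCommGroup M] [Module S M] := canonicalInclusion_exact S M
  have hq (M : Type u) [AddCommGroup M] [Module S M] := canonicalCover_surjective S M
  have hkA {M : Type u} [AddCommGroup M] [Module S M] (hM : TorVanishes S 0 A M) :
      Injective ((canonicalInclusion S M).baseChange A) :=
    hM.baseChange_injective (hk M) (hkq M) (hq M)
  have hkqA (M : Type u) [AddCommGroup M] [Module S M] :
      Exact ((canonicalInclusion S M).baseChange A) ((canonicalCover S M).baseChange A) :=
    exact_baseChange A (hkq M) (hq M)
  have hqA (M : Type u) [AddCommGroup M] [Module S M] :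
      Surjective ((canonicalCover S M).baseChange A) := lTensor_surjective A (hq M)
  induction i generalizing M with
  | zero =>
    rw [zero_iff_rTensor_injective (hk M) (hkq M) (hq M),
      zero_iff_rTensor_injective (hkA (hM 0)) (hkqA M) (hqA M), ← lTensor_inj_iff_rTensor_inj,
      ← lTensor_inj_iff_rTensor_inj, lTensor_baseChange_injective_iff]
  | succ i ih =>
    rw [succ_iff_left i (hk M) (hkq M) (hq M), succ_iff_left i (hkA (hM 0)) (hkqA M) (hqA M)]
    exact ih fun j ↦ (succ_iff_right j (hk M) (hkq M) (hq M)).1 (hM (j + 1))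

lemma tensor_right (A : Type u) [AddCommGroup A] [Module S A] [Module.Flat S A] {i : ℕ}
    (h : TorVanishes S i M N) : TorVanishes S i M (A ⊗[S] N) := by
  induction i generalizing M with
  | zero =>
    have hk := canonicalInclusion_injective S M
    have hkq := canonicalInclusion_exact S M
    have hq := canonicalCover_surjective S M
    rw [zero_iff_rTensor_injective hk hkq hq, ← lTensor_inj_iff_rTensor_inj] at h ⊢
    rw [lTensor_tensor]
    simpa using Module.Flat.lTensor_preserves_injective_linearMap (M := A) _ h
  | succ i ih => exact ih h

lemma flat_baseChange [Module.Flat S A] {i : ℕ} (h : TorVanishes S i M N) :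
    TorVanishes A i (A ⊗[S] M) (A ⊗[S] N) :=
  (iff_baseChange_left i fun j ↦ of_flat_left j).1 (h.tensor_right A)

end TorVanishes

end BaseChange

section Hypersurface

open TensorProduct LinearMap Function

variable {S A : Type u} [CommRing S] [CommRing A] [Algebra S A] {f : S} {K F M N : Type u}
  [AddCommGroup K] [Module S K] [AddCommGroup F] [Module S F]
  [AddCommGroup M] [Module S M] [Module A M] [IsScalarTower S A M]
  [AddCommGroup N] [Module S N] [Module A N] [IsScalarTower S A N]

lemma exact_lsmul_algebraLinearMap (hker : RingHom.ker (algebraMap S A) = Ideal.span {f}) :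
    Exact (lsmul S S f) (Algebra.linearMap S A) := by
  intro s
  rw [Algebra.linearMap_apply, ← RingHom.mem_ker, hker, Ideal.mem_span_singleton']
  simp only [Set.mem_range, lsmul_apply, smul_eq_mul, mul_comm]

lemma exact_lsmul_mk_one (hA : Surjective (algebraMap S A))
    (hker : RingHom.ker (algebraMap S A) = Ideal.span {f}) :
    Exact (lsmul S K f) (TensorProduct.mk S A K 1) := by
  refine (Exact.iff_of_ladder_linearEquiv (e₁ := (TensorProduct.lid S K).symm)
    (e₂ := (TensorProduct.lid S K).symm) (e₃ := LinearEquiv.refl S (A ⊗[S] K))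
    ?_ ?_).1 (rTensor_exact K (exact_lsmul_algebraLinearMap hker) hA)
  all_goals
    ext
    simp [smul_tmul']

lemma TorVanishes.of_isSMulRegular (hA : Surjective (algebraMap S A)) (hf : IsSMulRegular S f)
    (hker : RingHom.ker (algebraMap S A) = Ideal.span {f}) (hK : IsSMulRegular K f) (j : ℕ) :
    TorVanishes S j A K := by
  have hex := exact_lsmul_algebraLinearMap hker
  cases j with
  | zero =>
    rw [zero_iff_rTensor_injective (k := lsmul S S f) hf hex hA]
    change Injective ((DistribSMul.toLinearMap S S f).rTensor K)
    rw [rTensor_smul_action]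
    exact ((TensorProduct.lid S K).isSMulRegular_congr f).2 hK
  | succ j =>
    rw [succ_iff_left j (k := lsmul S S f) hf hex hA]
    exact of_flat_left j

lemma exact_baseChange_liftBaseChange (hA : Surjective (algebraMap S A)) {k : K →ₗ[S] F}
    {q : F →ₗ[S] M} (hkq : Exact k q) (hq : Surjective q) :
    Exact (k.baseChange A) (q.liftBaseChange A) := by
  have := CompatibleSMul.of_algebraMap_surjective A M hA
  refine (Exact.iff_of_ladder_linearEquiv (e₁ := LinearEquiv.refl A (A ⊗[S] K))
    (e₂ := LinearEquiv.refl A (A ⊗[S] F)) (e₃ := TensorProduct.lidOfCompatibleSMul S A M)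
    (by ext; simp) ?_).2 (exact_baseChange A hkq hq)
  ext x
  simpa using (TensorProduct.lidOfCompatibleSMul_tmul S A M 1 (q x)).symm

lemma exists_injective_exact_baseChange (hA : Surjective (algebraMap S A))
    (hker : RingHom.ker (algebraMap S A) = Ideal.span {f}) (hF : IsSMulRegular F f)
    {k : K →ₗ[S] F} {q : F →ₗ[S] M} (hk : Injective k) (hkq : Exact k q) (hq : Surjective q) :
    ∃ μ : M →ₗ[A] A ⊗[S] K, Injective μ ∧ Exact μ (k.baseChange A) := by
  have hf : algebraMap S A f = 0 := RingHom.mem_ker.1 (hker ▸ Ideal.mem_span_singleton_self f)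
  have hM : Exact (LinearMap.id (R := S)) (lsmul S M f) := fun m ↦
    iff_of_true (by rw [lsmul_apply, ← algebraMap_smul A, hf, zero_smul]) ⟨m, rfl⟩
  have hF' : Exact (0 : PUnit.{u + 1} →ₗ[S] F) (lsmul S F f) := (exact_zero_iff_injective _ _).2 hF
  have hmk (K : Type u) [AddCommGroup K] [Module S K] :
      Exact (lsmul S K f) (TensorProduct.mk S A K 1) := exact_lsmul_mk_one hA hker
  have h₁ : lsmul S F f ∘ₗ k = k ∘ₗ lsmul S K f := by ext; simp
  have h₂ : lsmul S M f ∘ₗ q = q ∘ₗ lsmul S F f := by ext; simp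
  let δ : M →ₗ[S] A ⊗[S] K :=
    SnakeLemma.δ' _ _ _ k q hkq k q hkq h₁.symm h₂.symm LinearMap.id hM _ (hmk K) hq hk
  have hδ : Exact (0 : PUnit.{u + 1} →ₗ[S] M) δ :=
    SnakeLemma.exact_δ'_right _ _ _ _ _ _ _ _ _ _ _ _ hF' _ _ _ _ _ _ _ (by ext; simp) injective_id
  have hδk : Exact δ (k.lTensor A) :=
    SnakeLemma.exact_δ'_left _ _ _ _ _ _ _ _ _ _ _ _ _ _ _ _ (hmk F) _ _ _ (by ext; simp)
      (TensorProduct.mk_surjective S K A hA)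
  exact ⟨δ.extendScalarsOfSurjective hA, (exact_zero_iff_injective _ _).1 hδ, hδk⟩

namespace TorVanishes

lemma exists_exact_of_hypersurface (hA : Surjective (algebraMap S A)) (hf : IsSMulRegular S f)
    (hker : RingHom.ker (algebraMap S A) = Ideal.span {f}) (M : Type u) [AddCommGroup M]
    [Module S M] [Module A M] [IsScalarTower S A M] :
    ∃ (K L : Type u) (_ : AddCommGroup K) (_ : Module S K) (_ : AddCommGroup L) (_ : Module A L)
      (μ : M →ₗ[A] A ⊗[S] K) (σ : A ⊗[S] K →ₗ[A] L),
      Injective μ ∧ Exact μ σ ∧ Surjective σ ∧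
      ∀ (i : ℕ) (N : Type u) [AddCommGroup N] [Module S N] [Module A N] [IsScalarTower S A N],
        (TorVanishes S (i + 1) M N ↔ TorVanishes A i (A ⊗[S] K) N) ∧
        (TorVanishes A (i + 1) M N ↔ TorVanishes A i L N) := by
  have hk := canonicalInclusion_injective S M
  have hkq := canonicalInclusion_exact S M
  have hq := canonicalCover_surjective S M
  have hF : IsSMulRegular (M →₀ S) f :=
    ((TensorProduct.rid S _).isSMulRegular_congr f).1 (hf.lTensor _)
  have hK : IsSMulRegular (CanonicalSyzygy S M) f := hF.of_injective _ hk
  have hκq := exact_baseChange_liftBaseChange hA hkq hq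
  let κ := (canonicalInclusion S M).baseChange A
  obtain ⟨μ, hμ, hμκ⟩ := exists_injective_exact_baseChange hA hker hF hk hkq hq
  refine ⟨CanonicalSyzygy S M, range κ, inferInstance, inferInstance, inferInstance,
    inferInstance, μ, κ.rangeRestrict, hμ, fun z ↦ Subtype.ext_iff.trans (hμκ z),
    κ.surjective_rangeRestrict, fun i N _ _ _ _ ↦ ⟨?_, ?_⟩⟩
  · rw [succ_iff_left i hk hkq hq, iff_baseChange_left i (of_isSMulRegular hA hf hker hK)]
  · refine succ_iff_left i (range κ).injective_subtype
      (q := (canonicalCover S M).liftBaseChange A) ?_ fun m ↦ ?_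
    · rw [exact_iff, Submodule.range_subtype, hκq.linearMap_ker_eq]
    · obtain ⟨x, rfl⟩ := hq m
      exact ⟨1 ⊗ₜ x, by simp⟩

lemma succ_of_hypersurface (hA : Surjective (algebraMap S A)) (hf : IsSMulRegular S f)
    (hker : RingHom.ker (algebraMap S A) = Ideal.span {f}) {i : ℕ}
    (h : TorVanishes A i M N) (h' : TorVanishes A (i + 1) M N) : TorVanishes S (i + 1) M N := by
  obtain ⟨K, L, _, _, _, _, μ, σ, hμ, hμσ, hσ, hM⟩ := exists_exact_of_hypersurface hA hf hker M
  rw [(hM i N).1]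
  exact of_exact_middle hμ hμσ hσ h ((hM i N).2.1 h')

lemma of_hypersurface (hA : Surjective (algebraMap S A)) (hf : IsSMulRegular S f)
    (hker : RingHom.ker (algebraMap S A) = Ideal.span {f}) {i : ℕ}
    (h : TorVanishes S (i + 1) M N) (h' : TorVanishes A (i + 2) M N) : TorVanishes A i M N := by
  obtain ⟨K, L, _, _, _, _, μ, σ, hμ, hμσ, hσ, hM⟩ := exists_exact_of_hypersurface hA hf hker M
  exact of_exact_left hμ hμσ hσ ((hM i N).1.1 h) ((hM (i + 1) N).2.1 h')

end TorVanishes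

end Hypersurface

/-! ### Regular elements -/

section RegularElement

open TensorProduct LinearMap Function

variable {S : Type u} [CommRing S] {x : S} {M N : Type u}
  [AddCommGroup M] [Module S M] [AddCommGroup N] [Module S N]

lemma exact_lsmul_mkQ (x : S) (M : Type u) [AddCommGroup M] [Module S M] :
    Exact (lsmul S M x) (Submodule.mkQ _ : M →ₗ[S] QuotSMulTop x M) := by
  intro m
  simp [Submodule.mem_smul_pointwise_iff_exists]

lemma exists_comp_canonicalInclusion_eq_smul {G : Type u} [AddCommGroup G] [Module S G]
    [Module.Projective S G] {a : N →ₗ[S] G} {b : G →ₗ[S] N} (hba : ∀ n, b (a n) = x • n) :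
    ∃ r : (N →₀ S) →ₗ[S] CanonicalSyzygy S N, ∀ y, r (canonicalInclusion S N y) = x • y := by
  obtain ⟨b', hb'⟩ := Module.projective_lifting_property _ b (canonicalCover_surjective S N)
  let r₀ : (N →₀ S) →ₗ[S] (N →₀ S) := lsmul S _ x - b' ∘ₗ a ∘ₗ canonicalCover S N
  have hr₀ (z : N →₀ S) : canonicalCover S N (r₀ z) = 0 := by
    have : canonicalCover S N (b' (a (canonicalCover S N z))) = x • canonicalCover S N z := by
      rw [← LinearMap.comp_apply, hb', hba]
    simp only [r₀, LinearMap.sub_apply, lsmul_apply, LinearMap.comp_apply, map_sub, map_smul,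
      this, sub_self]
  refine ⟨r₀.codRestrict (ker (canonicalCover S N)) hr₀, fun y ↦ Subtype.ext ?_⟩
  change x • canonicalInclusion S N y -
    b' (a (canonicalCover S N (canonicalInclusion S N y))) = x • canonicalInclusion S N y
  rw [(canonicalInclusion_exact S N).apply_apply_eq_zero, map_zero, map_zero, sub_zero]

lemma ker_lTensor_le_span_smul (hM : IsSMulRegular M x) {L P : Type u} [AddCommGroup L]
    [Module S L] [AddCommGroup P] [Module S P] [Module.Flat S P] {l : L →ₗ[S] P}
    (hl : Injective (l.lTensor (QuotSMulTop x M))) :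
    ker (l.lTensor M) ≤ Ideal.span {x} • ker (l.lTensor M) := by
  intro z hz
  have hzx : (Submodule.mkQ _ : M →ₗ[S] QuotSMulTop x M).rTensor L z = 0 := by
    apply hl
    rw [← rTensor_lTensor_comm, mem_ker.1 hz, map_zero, map_zero]
  obtain ⟨y, rfl⟩ :=
    (rTensor_exact L (exact_lsmul_mkQ x M) (Submodule.mkQ_surjective _) z).1 hzx
  have hy : l.lTensor M y = 0 := by
    apply Module.Flat.rTensor_preserves_injective_linearMap (M := P) (lsmul S M x) hM
    rw [rTensor_lTensor_comm, mem_ker.1 hz, map_zero]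
  have hxy : (lsmul S M x).rTensor L y = x • y := by
    change (DistribSMul.toLinearMap S M x).rTensor L y = x • y
    rw [rTensor_smul_action, DistribSMul.toLinearMap_apply]
  rw [hxy]
  exact Submodule.smul_mem_smul (Ideal.mem_span_singleton_self x) hy

namespace TorVanishes

-- Since `x` acts on `Tor_{i+1}(M, N)` through `Tor_{i+1}(M, G) = 0`, it kills `Tor_{i+1}(M, N)`,
-- while the kernel of its action is a quotient of `Tor_{i+2}(M / xM, N)`.
lemma of_quotSMulTop_of_factors (hM : IsSMulRegular M x) {G : Type u} [AddCommGroup G] [Module S G]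
    [Module.Projective S G] {a : N →ₗ[S] G} {b : G →ₗ[S] N} (hba : ∀ n, b (a n) = x • n) {i : ℕ}
    (h : TorVanishes S (i + 1) (QuotSMulTop x M) N) : TorVanishes S i M N := by
  induction i generalizing N G with
  | zero =>
    have hl := canonicalInclusion_injective S N
    have hlq := canonicalInclusion_exact S N
    have hq := canonicalCover_surjective S N
    obtain ⟨r, hr⟩ := exists_comp_canonicalInclusion_eq_smul hba
    have hrl : r ∘ₗ canonicalInclusion S N = DistribSMul.toLinearMap S _ x := LinearMap.ext hr
    have hx : Injective ((lsmul S M x).rTensor (CanonicalSyzygy S N)) :=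
      ((succ_iff_right 0 hl hlq hq).1 h).rTensor_injective hM (exact_lsmul_mkQ x M)
        (Submodule.mkQ_surjective _)
    rw [zero_iff_lTensor_injective hl hlq hq]
    refine Injective.of_comp (f := r.lTensor M) ?_
    rw [← LinearMap.coe_comp, ← lTensor_comp, hrl, lTensor_smul_action]
    rwa [← rTensor_smul_action]
  | succ i ih =>
    have hl := canonicalInclusion_injective S N
    have hlq := canonicalInclusion_exact S N
    have hq := canonicalCover_surjective S N
    obtain ⟨r, hr⟩ := exists_comp_canonicalInclusion_eq_smul hba
    rw [succ_iff_right _ hl hlq hq] at h ⊢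
    exact ih hr h

lemma of_quotSMulTop_of_smul_eq_zero (hM : IsSMulRegular M x) (hN : ∀ n : N, x • n = 0) {i : ℕ}
    (h : TorVanishes S (i + 1) (QuotSMulTop x M) N) : TorVanishes S i M N :=
  of_quotSMulTop_of_factors (a := (0 : N →ₗ[S] PUnit.{u + 1})) (b := 0) hM
    (fun n ↦ (hN n).symm) h

lemma of_isWeaklyRegular {xs : List S} (hM : IsWeaklyRegular M xs)
    (hN : ∀ x ∈ xs, ∀ n : N, x • n = 0) {i : ℕ}
    (h : TorVanishes S (i + xs.length) (M ⧸ Ideal.ofList xs • (⊤ : Submodule S M)) N) :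
    TorVanishes S i M N := by
  induction xs generalizing M i with
  | nil => exact h.of_equiv (Submodule.quotEquivOfEqBot _ (by simp))
  | cons x xs ih =>
    rw [isWeaklyRegular_cons_iff] at hM
    refine of_quotSMulTop_of_smul_eq_zero hM.1 (hN x (by simp))
      (ih hM.2 (fun y hy ↦ hN y (by simp [hy])) ?_)
    rw [add_right_comm]
    exact h.of_equiv (Submodule.quotOfListConsSMulTopEquivQuotSMulTopInner M x xs)

lemma quotSMulTop (hM : IsSMulRegular M x) {i : ℕ} (h : TorVanishes S i M N)
    (h' : TorVanishes S (i + 1) M N) : TorVanishes S (i + 1) (QuotSMulTop x M) N :=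
  of_exact_right (f := lsmul S M x) hM (exact_lsmul_mkQ x M) (Submodule.mkQ_surjective _) h h'

lemma quotient_ofList {xs : List S} (hM : IsWeaklyRegular M xs) {n : ℕ}
    (h : ∀ i ≥ n, TorVanishes S i M N) :
    ∀ i ≥ n + xs.length, TorVanishes S i (M ⧸ Ideal.ofList xs • (⊤ : Submodule S M)) N := by
  induction xs generalizing M n with
  | nil => exact fun i hi ↦ (h i hi).of_equiv (Submodule.quotEquivOfEqBot _ (by simp)).symm
  | cons x xs ih =>
    rw [isWeaklyRegular_cons_iff] at hM
    intro i hi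
    refine (ih (n := n + 1) hM.2 (fun j hj ↦ ?_) i (by grind)).of_equiv
      (Submodule.quotOfListConsSMulTopEquivQuotSMulTopInner M x xs).symm
    obtain ⟨j, rfl⟩ := Nat.exists_eq_add_of_le' (Nat.one_le_of_lt hj)
    exact quotSMulTop hM.1 (h j (by omega)) (h (j + 1) (by omega))

lemma of_quotSMulTop_of_mem_jacobson [IsNoetherianRing S] [Module.Finite S M] [Module.Finite S N]
    (hx : x ∈ (⊥ : Ideal S).jacobson) (hM : IsSMulRegular M x) {i : ℕ}
    (h : TorVanishes S i (QuotSMulTop x M) N) : TorVanishes S i M N := by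
  induction i generalizing N with
  | zero =>
    obtain ⟨n, q, hq⟩ := Module.Finite.exists_fin' S N
    have hl := (ker q).injective_subtype
    have hlq := exact_subtype_ker_map q
    rw [zero_iff_lTensor_injective hl hlq hq] at h ⊢
    rw [← ker_eq_bot]
    refine Submodule.eq_bot_of_le_smul_of_le_jacobson_bot (Ideal.span {x}) _
      (IsNoetherian.noetherian _) (ker_lTensor_le_span_smul hM h) ?_
    rwa [Ideal.span_singleton_le_iff_mem]
  | succ i ih =>
    obtain ⟨n, q, hq⟩ := Module.Finite.exists_fin' S N
    rw [succ_iff_right i (ker q).injective_subtype (exact_subtype_ker_map q) hq] at h ⊢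
    exact ih h

end TorVanishes

end RegularElement

/-! ### Rings of finite Tor-dimension -/

section TorDimension

open TensorProduct LinearMap Function IsLocalRing

variable {S : Type u} [CommRing S]

lemma exact_lsmul_factor (I : Ideal S) (a : S) :
    Exact (lsmul S (S ⧸ I) a)
      (Submodule.factor (le_sup_left : I ≤ I ⊔ Ideal.span {a})) := by
  intro y
  obtain ⟨y, rfl⟩ := Submodule.mkQ_surjective _ y
  change Submodule.Quotient.mk y = (0 : S ⧸ I ⊔ Ideal.span {a}) ↔ _
  rw [Submodule.Quotient.mk_eq_zero, sup_comm, Ideal.mem_span_singleton_sup]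
  constructor
  · rintro ⟨r, b, hb, rfl⟩
    exact ⟨I.mkQ r, (Submodule.Quotient.eq I).2 (by simpa [mul_comm a r] using hb)⟩
  · rintro ⟨z, hz⟩
    obtain ⟨r, rfl⟩ := I.mkQ_surjective z
    have hr : r * a - y ∈ I := mul_comm a r ▸ (Submodule.Quotient.eq I).1 hz
    exact ⟨r, -(r * a - y), I.neg_mem hr, by ring⟩

namespace TorVanishes

variable {N : Type u} [AddCommGroup N] [Module S N] {i : ℕ}

lemma isOka_quotient (i : ℕ) (N : Type u) [AddCommGroup N] [Module S N] :
    Ideal.IsOka fun I : Ideal S ↦ TorVanishes S i (S ⧸ I) N where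
  top := of_flat_left i
  oka {I a} hsup hcolon := by
    let φ : S →ₗ[S] S ⧸ I := lsmul S (S ⧸ I) a ∘ₗ I.mkQ
    have hφ : I.colon (Ideal.span {a}) = ker φ := by
      ext s
      rw [Ideal.mem_colon_span_singleton, mul_comm]
      exact (Submodule.Quotient.mk_eq_zero I).symm
    let e := Submodule.quotEquivOfEq _ _ hφ
    have hrange : range φ = range (lsmul S (S ⧸ I) a) :=
      range_comp_of_range_eq_top _ I.range_mkQ
    refine of_exact_middle (range φ).injective_subtype (g := Submodule.factor le_sup_left) ?_
      (Submodule.factor_surjective _) (hcolon.of_equiv (e ≪≫ₗ φ.quotKerEquivRange)) hsup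
    rw [exact_iff, Submodule.range_subtype, hrange, (exact_lsmul_factor I a).linearMap_ker_eq]

variable [IsNoetherianRing S] [IsLocalRing S] [Module.Finite S N]

lemma quotient_of_residueField (h : TorVanishes S i (ResidueField S) N) (I : Ideal S) :
    TorVanishes S i (S ⧸ I) N := by
  by_contra hI
  obtain ⟨p, hp⟩ :=
    exists_maximal_of_wellFoundedGT (fun I : Ideal S ↦ ¬ TorVanishes S i (S ⧸ I) N) ⟨I, hI⟩
  have hprime := (isOka_quotient i N).isPrime_of_maximal_not hp
  have hpm : p < maximalIdeal S :=
    (le_maximalIdeal hprime.ne_top).lt_of_ne fun hpm ↦ hp.prop (hpm ▸ h)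
  obtain ⟨x, hx, hxp⟩ := SetLike.exists_of_lt hpm
  have hreg : IsSMulRegular (S ⧸ p) x := (isSMulRegular_quotient_iff_mem_of_smul_mem p x).2
    fun s hs ↦ (hprime.mem_or_mem hs).resolve_left hxp
  have hsup : TorVanishes S i (S ⧸ p ⊔ Ideal.span {x}) N :=
    of_not_not (hp.not_prop_of_gt (Submodule.lt_sup_iff_notMem.2 hxp))
  let e : (S ⧸ p ⊔ Ideal.span {x}) ≃ₗ[S] QuotSMulTop x (S ⧸ p) :=
    ((exact_lsmul_factor p x).linearEquivOfSurjective (Submodule.factor_surjective _)).symm ≪≫ₗ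
      (exact_lsmul_mkQ x _).linearEquivOfSurjective (Submodule.mkQ_surjective _)
  refine hp.prop (of_quotSMulTop_of_mem_jacobson ?_ hreg (hsup.of_equiv e))
  rwa [jacobson_eq_maximalIdeal ⊥ bot_ne_top]

lemma of_residueField (h : TorVanishes S i (ResidueField S) N) (M : Type u) [AddCommGroup M]
    [Module S M] [hM : Module.Finite S M] : TorVanishes S i M N := by
  induction hM using IsNoetherianRing.induction_on_isQuotientEquivQuotientPrime S with
  | subsingleton M => exact of_flat_left i
  | quotient M p e => exact (h.quotient_of_residueField p.1).of_equiv e.symm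
  | exact N₁ N₂ N₃ f g hf hg hfg h₁ h₃ => exact of_exact_middle hf hfg hg h₁ h₃

end TorVanishes

section Embedding

variable [IsNoetherianRing S] [IsLocalRing S]

lemma exists_injective_residueField_or_isSMulRegular (C : Type u) [AddCommGroup C] [Module S C]
    [Module.Finite S C] : (∃ f : ResidueField S →ₗ[S] C, Injective f) ∨
      ∃ x ∈ maximalIdeal S, IsSMulRegular C x := by
  cases subsingleton_or_nontrivial (ResidueField S →ₗ[S] C) with
  | inl h =>
    obtain ⟨x, hx, hreg⟩ := IsSMulRegular.subsingleton_linearMap_iff.1 h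
    exact .inr ⟨x, Ideal.annihilator_quotient (I := maximalIdeal S) ▸ hx, hreg⟩
  | inr h =>
    obtain ⟨f, hf⟩ := exists_ne (0 : ResidueField S →ₗ[S] C)
    have : IsSimpleModule S (ResidueField S) :=
      isSimpleModule_iff_isCoatom.2 (maximalIdeal.isMaximal S).out
    exact .inl ⟨f, LinearMap.injective_of_ne_zero hf⟩

lemma exists_residueField_embedding (n a : ℕ) (C : Type u) [AddCommGroup C] [Module S C]
    [Module.Finite S C] [Nontrivial C] (hn : Module.supportDim S C < n)
    (hC : ∀ (X : Type u) [AddCommGroup X] [Module S X], ∀ i ≥ a, TorVanishes S i C X) :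
    ∃ (C' : Type u) (_ : AddCommGroup C') (_ : Module S C') (f : ResidueField S →ₗ[S] C'),
      Module.Finite S C' ∧ Injective f ∧ ∀ (X : Type u) [AddCommGroup X] [Module S X],
        ∀ i, a + n ≤ i + 1 → TorVanishes S i C' X := by
  induction n generalizing a C with
  | zero =>
    exact absurd ((WithBot.lt_zero_iff_eq_bot _).1 hn) (Module.supportDim_ne_bot_of_nontrivial S C)
  | succ n ih =>
    obtain ⟨f, hf⟩ | ⟨x, hx, hreg⟩ := exists_injective_residueField_or_isSMulRegular (S := S) C
    · exact ⟨C, _, _, f, inferInstance, hf, fun X _ _ i hi ↦ hC X i (by omega)⟩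
    have := nontrivial_quotSMulTop_of_mem_maximalIdeal C hx
    have hdim : Module.supportDim S (QuotSMulTop x C) < n := by
      rwa [← Module.supportDim_quotSMulTop_succ_eq_supportDim hreg hx, Nat.cast_succ,
        ENat.WithBot.lt_add_one_iff, ENat.WithBot.add_one_le_natCast_iff] at hn
    obtain ⟨C', _, _, f, hfin, hf, hC'⟩ := ih (a + 1) (QuotSMulTop x C) hdim fun X _ _ i hi ↦ by
      obtain ⟨i, rfl⟩ := Nat.exists_eq_add_of_le' (Nat.one_le_of_lt hi)
      exact TorVanishes.quotSMulTop hreg (hC X i (by omega)) (hC X (i + 1) (by omega))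
    exact ⟨C', _, _, f, hfin, hf, fun X _ _ i hi ↦ hC' X i (by omega)⟩

end Embedding

variable (S) in
/-- All `Tor_j(X, Y)` with `j > D` and `X`, `Y` finitely generated vanish, that is, the weak global
dimension of the noetherian ring `S` is at most `D`. -/
def TorDimensionLE (D : ℕ) : Prop :=
  ∀ (X Y : Type u) [AddCommGroup X] [Module S X] [Module.Finite S X] [AddCommGroup Y] [Module S Y]
    [Module.Finite S Y], ∀ i ≥ D, TorVanishes S i X Y

namespace TorDimensionLE

variable [IsNoetherianRing S] {D : ℕ}

section IsLocalRing

variable [IsLocalRing S]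

lemma of_residueField (h : ∀ i ≥ D, TorVanishes S i (ResidueField S) (ResidueField S)) :
    TorDimensionLE S D :=
  fun X Y _ _ _ _ _ _ i hi ↦ ((h i hi).of_residueField Y).symm.of_residueField X

lemma of_isWeaklyRegular {rs : List S} (hrs : IsWeaklyRegular S rs)
    (hm : Ideal.ofList rs = maximalIdeal S) : TorDimensionLE S rs.length := by
  refine of_residueField fun i hi ↦ ?_
  have := TorVanishes.quotient_ofList (N := ResidueField S) (n := 0) hrs
    (fun i _ ↦ .of_flat_left i) i (by rwa [zero_add])
  exact this.of_equiv (Submodule.quotEquivOfEq _ _ (by simp [hm]))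

-- With the residue field embedded in `C'`, whose Tor vanishes in degrees above `n`, the long exact
-- sequence moves the bound for the residue field down one degree at a time.
lemma of_ringKrullDim_le (h : TorDimensionLE S D) {n : ℕ} (hn : ringKrullDim S ≤ n) :
    TorDimensionLE S n := by
  obtain ⟨C', _, _, f, _, hf, hC'⟩ := exists_residueField_embedding (n + 1) 0 S
    (by rwa [Module.supportDim_self_eq_ringKrullDim, Nat.cast_succ, ENat.WithBot.lt_add_one_iff])
    fun X _ _ i _ ↦ TorVanishes.of_flat_left (R := S) i
  suffices ∀ t, TorDimensionLE S (n + t) → TorDimensionLE S n from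
    this D fun X Y _ _ _ _ _ _ i hi ↦ h X Y i (by omega)
  intro t ht
  induction t with
  | zero => exact ht
  | succ t ih =>
    refine ih (of_residueField fun i hi ↦ ?_)
    exact .of_exact_left hf (exact_map_mkQ_range f) (Submodule.mkQ_surjective _)
      (hC' _ i (by omega)) (ht _ _ (i + 1) (by omega))

lemma torVanishes_of_isWeaklyRegular (h : TorDimensionLE S D) {M N : Type u} [AddCommGroup M]
    [Module S M] [Module.Finite S M] [AddCommGroup N] [Module S N] [Module.Finite S N] {c : ℕ}
    {xs : List S} (hdim : ringKrullDim S ≤ (c + xs.length : ℕ)) (hx : ∀ x ∈ xs, x ∈ maximalIdeal S)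
    (hM : IsWeaklyRegular M xs) : ∀ i ≥ c, TorVanishes S i M N := by
  intro i hi
  have hk : TorVanishes S i M (ResidueField S) := by
    refine .of_isWeaklyRegular hM (fun x hxs k ↦ ?_)
      (h.of_ringKrullDim_le hdim _ _ _ (Nat.add_le_add_right hi _))
    obtain ⟨s, rfl⟩ := Ideal.Quotient.mk_surjective k
    exact (Submodule.Quotient.mk_eq_zero _).2 (Ideal.mul_mem_right _ _ (hx x hxs))
  exact (hk.symm.of_residueField N).symm

end IsLocalRing

lemma localization (h : TorDimensionLE S D) (q : Ideal S) [q.IsPrime] :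
    TorDimensionLE (Localization.AtPrime q) D := by
  have : IsNoetherianRing (Localization.AtPrime q) :=
    IsLocalization.isNoetherianRing q.primeCompl _ inferInstance
  let e : (Localization.AtPrime q ⊗[S] (S ⧸ q)) ≃ₗ[Localization.AtPrime q]
      ResidueField (Localization.AtPrime q) :=
    (Algebra.TensorProduct.quotIdealMapEquivTensorQuot
      (Localization.AtPrime q) q).symm.toLinearEquiv ≪≫ₗ
        Submodule.quotEquivOfEq _ _ Localization.AtPrime.map_eq_maximalIdeal
  refine of_residueField fun i hi ↦ ?_
  have hq := (h (S ⧸ q) (S ⧸ q) i hi).flat_baseChange (A := Localization.AtPrime q)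
  exact ((hq.of_equiv e).symm.of_equiv e).symm

end TorDimensionLE

end TorDimension

/-! ### Complete intersections -/

section CompleteIntersection

open TensorProduct LinearMap Function Filter

variable {S A : Type u} [CommRing S] [CommRing A] [Algebra S A] {M N : Type u}
  [AddCommGroup M] [Module S M] [Module A M] [IsScalarTower S A M]
  [AddCommGroup N] [Module S N] [Module A N] [IsScalarTower S A N]

namespace TorVanishes

lemma of_bijective_algebraMap (hA : Bijective (algebraMap S A)) {i : ℕ} (h : TorVanishes S i M N) :
    TorVanishes A i M N := by
  have : Module.Flat S A := .of_linearEquiv (.symm (.ofBijective (Algebra.linearMap S A) hA))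
  have := CompatibleSMul.of_algebraMap_surjective A M hA.2
  exact ((iff_baseChange_left i fun j ↦ of_flat_left j).1 h).of_equiv
    (TensorProduct.lidOfCompatibleSMul S A M)

lemma eventually_of_hypersurface {f : S} (hA : Surjective (algebraMap S A))
    (hf : IsSMulRegular S f) (hker : RingHom.ker (algebraMap S A) = Ideal.span {f})
    (h : ∀ᶠ i in atTop, TorVanishes A i M N) : ∀ᶠ i in atTop, TorVanishes S i M N := by
  obtain ⟨b, hb⟩ := eventually_atTop.1 h
  refine eventually_atTop.2 ⟨b + 1, fun i hi ↦ ?_⟩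
  obtain ⟨i, rfl⟩ := Nat.exists_eq_add_of_le' (Nat.one_le_of_lt hi)
  exact succ_of_hypersurface hA hf hker (hb i (by omega)) (hb (i + 1) (by omega))

lemma of_hypersurface_of_eventually {f : S} (hA : Surjective (algebraMap S A))
    (hf : IsSMulRegular S f) (hker : RingHom.ker (algebraMap S A) = Ideal.span {f})
    (h : ∀ᶠ i in atTop, TorVanishes A i M N) {c : ℕ} (hS : ∀ i ≥ c + 1, TorVanishes S i M N) :
    ∀ i ≥ c, TorVanishes A i M N := by
  obtain ⟨b, hb⟩ := eventually_atTop.1 h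
  suffices ∀ t, ∀ i ≥ c, b ≤ i + t → TorVanishes A i M N from
    fun i hi ↦ this b i hi (Nat.le_add_left b i)
  intro t
  induction t with
  | zero => exact fun i _ hi ↦ hb i hi
  | succ t ih =>
    exact fun i hi hit ↦ of_hypersurface hA hf hker (hS (i + 1) (by omega))
      (ih (i + 2) (by omega) (by omega))

theorem of_completeIntersection {rs : List S} (hrs : IsWeaklyRegular S rs)
    (hA : Surjective (algebraMap S A)) (hker : RingHom.ker (algebraMap S A) = Ideal.ofList rs)
    (h : ∀ᶠ i in atTop, TorVanishes A i M N) {c : ℕ}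
    (hS : ∀ i ≥ c + rs.length, TorVanishes S i M N) : ∀ i ≥ c, TorVanishes A i M N := by
  induction rs using List.reverseRecOn generalizing A c with
  | nil =>
    have hbij : Bijective (algebraMap S A) := by
      refine ⟨(RingHom.injective_iff_ker_eq_bot _).2 ?_, hA⟩
      rw [hker, Ideal.ofList_nil]
    exact fun i hi ↦ (hS i hi).of_bijective_algebraMap hbij
  | append_singleton rs f ih =>
    rw [isWeaklyRegular_append_iff, isWeaklyRegular_singleton_iff] at hrs
    let I := Ideal.ofList rs
    have hI : ∀ s ∈ I, algebraMap S A s = 0 := fun s hs ↦ by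
      rw [← RingHom.mem_ker, hker, Ideal.ofList_append]
      exact Ideal.mem_sup_left hs
    let φ : S ⧸ I →+* A := Ideal.Quotient.lift I (algebraMap S A) hI
    let : Algebra (S ⧸ I) A := φ.toAlgebra
    let : Module (S ⧸ I) M := Module.compHom M φ
    let : Module (S ⧸ I) N := Module.compHom N φ
    have : IsScalarTower S (S ⧸ I) M := .of_algebraMap_smul (algebraMap_smul A)
    have : IsScalarTower S (S ⧸ I) N := .of_algebraMap_smul (algebraMap_smul A)
    have : IsScalarTower (S ⧸ I) A M := .of_algebraMap_smul fun _ _ ↦ rfl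
    have : IsScalarTower (S ⧸ I) A N := .of_algebraMap_smul fun _ _ ↦ rfl
    have hA' : Surjective φ := Ideal.Quotient.lift_surjective_of_surjective _ _ hA
    have hker' : RingHom.ker φ = Ideal.span {Ideal.Quotient.mk I f} := by
      rw [Ideal.ker_quotient_lift _ hI, hker, Ideal.ofList_append, Ideal.map_sup,
        Ideal.map_quotient_self I, bot_sup_eq, Ideal.ofList_singleton, Ideal.map_span,
        Set.image_singleton]
    have hf : IsSMulRegular (S ⧸ I) (Ideal.Quotient.mk I f) := by
      refine (isSMulRegular_algebraMap_iff (S ⧸ I)).2 ?_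
      exact ((Submodule.quotEquivOfEq _ _ (Ideal.mul_top I)).isSMulRegular_congr f).1 hrs.2
    refine of_hypersurface_of_eventually hA' hf hker' h ?_
    refine ih hrs.1 Ideal.Quotient.mk_surjective Ideal.mk_ker
      (eventually_of_hypersurface hA' hf hker' h) ?_
    intro i hi
    exact hS i (by grind)

end TorVanishes

end CompleteIntersection

/-! ### Jorgensen's theorem and its passage to localizations -/

section Jorgensen

open TensorProduct LinearMap Function Filter

namespace TorVanishes

-- Jorgensen's theorem; `c` bounds how far `M` is from being maximal Cohen-Macaulay.
theorem of_eventually {S A : Type u} [CommRing S] [CommRing A] [Algebra S A] [IsNoetherianRing S]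
    [IsLocalRing S] {D : ℕ} (hD : TorDimensionLE S D) {rs : List S} (hrs : IsWeaklyRegular S rs)
    (hA : Surjective (algebraMap S A)) (hker : RingHom.ker (algebraMap S A) = Ideal.ofList rs)
    {M N : Type u} [AddCommGroup M] [Module A M] [Module.Finite A M] [AddCommGroup N] [Module A N]
    [Module.Finite A N] {xs : List A} (hx : ∀ x ∈ xs, x ∈ nonunits A) (hM : IsWeaklyRegular M xs)
    {c : ℕ} (hdim : ringKrullDim S ≤ (c + rs.length + xs.length : ℕ))
    (h : ∀ᶠ i in atTop, TorVanishes A i M N) : ∀ i ≥ c, TorVanishes A i M N := by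
  let : Module S M := Module.compHom M (algebraMap S A)
  let : Module S N := Module.compHom N (algebraMap S A)
  have : IsScalarTower S A M := .of_algebraMap_smul fun _ _ ↦ rfl
  have : IsScalarTower S A N := .of_algebraMap_smul fun _ _ ↦ rfl
  have : Module.Finite S A := .of_surjective (Algebra.linearMap S A) hA
  have : Module.Finite S M := .trans A M
  have : Module.Finite S N := .trans A N
  obtain ⟨ys, rfl⟩ := hA.list_map xs
  rw [isWeaklyRegular_map_algebraMap_iff] at hM
  have hy : ∀ y ∈ ys, y ∈ IsLocalRing.maximalIdeal S :=
    fun y hy hu ↦ hx _ (List.mem_map_of_mem hy) (hu.map _)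
  rw [List.length_map] at hdim
  exact of_completeIntersection hrs hA hker h (hD.torVanishes_of_isWeaklyRegular hdim hy hM)

lemma iff_faithfullyFlat_baseChange {R A : Type u} [CommRing R] [CommRing A] [Algebra R A]
    [Module.FaithfullyFlat R A] {M N : Type u} [AddCommGroup M] [Module R M] [AddCommGroup N]
    [Module R N] {i : ℕ} : TorVanishes A i (A ⊗[R] M) (A ⊗[R] N) ↔ TorVanishes R i M N := by
  refine ⟨fun h ↦ ?_, flat_baseChange⟩
  replace h : TorVanishes R i M (A ⊗[R] N) := (iff_baseChange_left i fun j ↦ of_flat_left j).2 h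
  induction i generalizing M with
  | zero =>
    have hk := canonicalInclusion_injective R M
    have hkq := canonicalInclusion_exact R M
    have hq := canonicalCover_surjective R M
    rw [zero_iff_rTensor_injective hk hkq hq, ← lTensor_inj_iff_rTensor_inj] at h ⊢
    rw [lTensor_tensor] at h
    simpa using h
  | succ i ih => exact ih h

end TorVanishes

/-- `R` has a faithfully flat local extension `A = S / (rs)`, where `S` is a noetherian local ring
of finite weak global dimension, `rs` is an `S`-regular sequence and `dim S - length rs ≤ d`.
Up to completion a complete intersection of dimension `d` has this form, and this notion, unlike
the presentation of the completion itself, visibly passes to localizations. -/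
def HasCIExtension (R : Type u) [CommRing R] (d : ℕ) : Prop :=
  ∃ (S A : Type u) (_ : CommRing S) (_ : CommRing A) (_ : Algebra R A) (_ : Algebra S A)
    (_ : IsNoetherianRing S) (_ : IsLocalRing S) (D : ℕ) (rs : List S),
    Module.FaithfullyFlat R A ∧ IsLocalHom (algebraMap R A) ∧ TorDimensionLE S D ∧
    IsWeaklyRegular S rs ∧ Surjective (algebraMap S A) ∧
    RingHom.ker (algebraMap S A) = Ideal.ofList rs ∧ ringKrullDim S ≤ (d + rs.length : ℕ)

theorem HasCIExtension.torVanishes {R : Type u} [CommRing R] {d : ℕ} (hR : HasCIExtension R d)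
    {M N : Type u} [AddCommGroup M] [Module R M] [Module.Finite R M] [AddCommGroup N] [Module R N]
    [Module.Finite R N] {xs : List R} (hx : ∀ x ∈ xs, x ∈ nonunits R) (hM : IsWeaklyRegular M xs)
    {c : ℕ} (hd : d ≤ c + xs.length) (h : ∀ᶠ i in atTop, TorVanishes R i M N) :
    ∀ i ≥ c, TorVanishes R i M N := by
  obtain ⟨S, A, _, _, _, _, _, _, D, rs, _, _, hD, hrs, hA, hker, hdim⟩ := hR
  have hxA : ∀ x ∈ xs.map (algebraMap R A), x ∈ nonunits A := by
    intro a ha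
    obtain ⟨x, hxs, rfl⟩ := List.mem_map.1 ha
    exact fun hu ↦ hx x hxs (isUnit_of_map_unit _ x hu)
  have hMA := hM.of_flat_of_isBaseChange (TensorProduct.isBaseChange R M A)
  have hdimA : ringKrullDim S ≤ (c + rs.length + (xs.map (algebraMap R A)).length : ℕ) :=
    hdim.trans (by rw [List.length_map]; exact_mod_cast (by omega))
  intro i hi
  exact TorVanishes.iff_faithfullyFlat_baseChange.1 (.of_eventually hD hrs hA hker hxA hMA hdimA
    (h.mono fun j hj ↦ hj.flat_baseChange) i hi)

end Jorgensen

section Localization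

open Function

variable {R B : Type u} [CommRing R] [CommRing B] [Algebra R B]

lemma height_le_of_mem_minimalPrimes_map [IsNoetherianRing R] [IsNoetherianRing B] {p : Ideal R}
    [p.IsPrime] {q : Ideal B} [q.LiesOver p]
    (hq : q ∈ (p.map (algebraMap R B)).minimalPrimes) : q.height ≤ p.height := by
  have := hq.isPrime
  have hfiber : (q.map (Ideal.Quotient.mk (p.map (algebraMap R B)))).height = 0 := by
    rw [Ideal.minimalPrimes_eq_comap] at hq
    obtain ⟨q, hq, rfl⟩ := hq
    have := hq.isPrime
    rwa [Ideal.map_comap_of_surjective _ Ideal.Quotient.mk_surjective, Ideal.height_eq_zero_iff]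
  simpa only [hfiber, add_zero] using Ideal.height_le_height_add_of_liesOver p q

lemma height_comap_le_height_add_length [IsNoetherianRing R] (hB : Surjective (algebraMap R B))
    {rs : List R} (hker : RingHom.ker (algebraMap R B) = Ideal.ofList rs) (q : Ideal B)
    [q.IsPrime] : (q.comap (algebraMap R B)).height ≤ q.height + rs.length := by
  let I := RingHom.ker (algebraMap R B)
  have hI : (I.spanFinrank : ℕ∞) ≤ rs.length := by
    classical
    rw [show I = Ideal.span (rs.toFinset : Set R) by simp [I, hker, Ideal.ofList]]
    refine Nat.cast_le.2 ((Submodule.spanFinrank_span_le_ncard_of_finite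
      rs.toFinset.finite_toSet).trans ?_)
    rw [Set.ncard_coe_finset]
    exact rs.toFinset_card_le
  obtain ⟨e, he⟩ : ∃ e : R ⧸ I ≃+* B, ∀ x, e (Ideal.Quotient.mk I x) = algebraMap R B x :=
    ⟨RingHom.quotientKerEquivOfSurjective hB, fun _ ↦ rfl⟩
  have hq : q.comap (algebraMap R B) = (q.comap e).comap (Ideal.Quotient.mk I) := by
    ext x
    simp only [Ideal.mem_comap, he]
  calc (q.comap (algebraMap R B)).height
      ≤ ((q.comap (algebraMap R B)).map (Ideal.Quotient.mk I)).height + I.spanFinrank :=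
        Ideal.height_le_height_add_spanFinrank_of_le (Ideal.ker_le_comap _)
    _ = q.height + I.spanFinrank := by
        rw [hq, Ideal.map_comap_of_surjective _ Ideal.Quotient.mk_surjective, e.height_comap]
    _ ≤ q.height + rs.length := by gcongr

lemma exists_mem_minimalPrimes_map_liesOver [Module.FaithfullyFlat R B] (p : Ideal R) [p.IsPrime] :
    ∃ q ∈ (p.map (algebraMap R B)).minimalPrimes, q.LiesOver p := by
  have hp : p ∈ ((p.map (algebraMap R B)).comap (algebraMap R B)).minimalPrimes := by
    rw [Ideal.comap_map_eq_self_of_faithfullyFlat, Ideal.minimalPrimes_eq_subsingleton_self]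
    rfl
  obtain ⟨q, hq, hqp⟩ := Ideal.exists_minimalPrimes_comap_eq _ p hp
  exact ⟨q, hq, ⟨hqp.symm⟩⟩

lemma HasCIExtension.localization_of_surjective {Q : Type u} [CommRing Q] [IsNoetherianRing Q]
    {D : ℕ} (hD : TorDimensionLE Q D) {rs : List Q} (hrs : IsWeaklyRegular Q rs) {π : Q →+* B}
    (hπ : Surjective π) (hker : RingHom.ker π = Ideal.ofList rs)
    [IsNoetherianRing R] [Module.FaithfullyFlat R B] (p : Ideal R) [p.IsPrime] {d : ℕ}
    (hd : p.height ≤ d) : HasCIExtension (Localization.AtPrime p) d := by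
  have : IsNoetherianRing B := isNoetherianRing_of_surjective Q B π hπ
  let : Algebra Q B := π.toAlgebra
  obtain ⟨q, hq, _⟩ := exists_mem_minimalPrimes_map_liesOver (B := B) p
  have := hq.isPrime
  let q' := q.under Q
  let : Algebra (Localization.AtPrime p) (Localization.AtPrime q) :=
    Localization.AtPrime.algebraOfLiesOver p q
  let : Algebra (Localization.AtPrime q') (Localization.AtPrime q) :=
    Localization.AtPrime.algebraOfLiesOver q' q
  have hlocal : IsLocalHom (algebraMap (Localization.AtPrime p) (Localization.AtPrime q)) :=
    Localization.isLocalHom_localRingHom p q (algebraMap R B) Ideal.LiesOver.over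
  have hcompl : q'.primeCompl.map π = q.primeCompl :=
    Submonoid.map_comap_eq_of_surjective hπ q.primeCompl
  have hdim : ringKrullDim (Localization.AtPrime q') ≤
      (d + (rs.map (algebraMap Q (Localization.AtPrime q'))).length : ℕ) := by
    have : q'.height ≤ (d + rs.length : ℕ) :=
      calc q'.height ≤ q.height + rs.length := height_comap_le_height_add_length hπ hker q
        _ ≤ p.height + rs.length := by gcongr; exact height_le_of_mem_minimalPrimes_map hq
        _ ≤ (d + rs.length : ℕ) := by push_cast; gcongr
    rw [IsLocalization.AtPrime.ringKrullDim_eq_height q', List.length_map]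
    exact_mod_cast this
  refine ⟨Localization.AtPrime q', Localization.AtPrime q, _, _, _, inferInstance,
    IsLocalization.isNoetherianRing q'.primeCompl _ inferInstance, inferInstance, D, _,
    .of_flat_of_isLocalHom, hlocal, hD.localization q', hrs.of_isLocalization _ q'.primeCompl,
    RingHom.surjective_localRingHom_of_surjective _ hπ q, ?_, hdim⟩
  rw [← Ideal.map_ofList, ← hker]
  exact IsLocalization.ker_map (Localization.AtPrime q) π hcompl

lemma faithfullyFlat_adicCompletion (R : Type u) [CommRing R] [IsNoetherianRing R]
    [IsLocalRing R] : Module.FaithfullyFlat R (AdicCompletion (IsLocalRing.maximalIdeal R) R) :=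
  have : Module.Flat R (AdicCompletion (IsLocalRing.maximalIdeal R) R) :=
    AdicCompletion.flat_of_isNoetherian _
  .of_flat_of_isLocalHom

lemma HasCIExtension.localization_of_ringEquiv {Q : Type u} [CommRing Q] [IsNoetherianRing Q]
    {D : ℕ} (hD : TorDimensionLE Q D) {rs : List Q} (hrs : IsWeaklyRegular Q rs)
    (e : (Q ⧸ Ideal.ofList rs) ≃+* B) [IsNoetherianRing R] [Module.FaithfullyFlat R B] (p : Ideal R)
    [p.IsPrime] {d : ℕ} (hd : p.height ≤ d) : HasCIExtension (Localization.AtPrime p) d :=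
  .localization_of_surjective hD hrs (e.surjective.comp Ideal.Quotient.mk_surjective)
    ((RingHom.ker_equiv_comp (Ideal.Quotient.mk _) e).trans Ideal.mk_ker) p hd

theorem IsCIRing.hasCIExtension_localization {R : Type u} [CommRing R] (hR : IsCIRing R)
    (p : Ideal R) [p.IsPrime] {d : ℕ} (hd : p.height ≤ d) :
    HasCIExtension (Localization.AtPrime p) d := by
  obtain ⟨_, _, Q, _, ⟨_, _, ms, hms, -, hm⟩, rs, -, hrs, ⟨e⟩⟩ := hR
  have hm' : Ideal.ofList ms = IsLocalRing.maximalIdeal Q :=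
    hm.trans (Ideal.span_eq (IsLocalRing.maximalIdeal Q))
  rw [show Ideal.span (nonunits R) = IsLocalRing.maximalIdeal R from
    Ideal.span_eq (IsLocalRing.maximalIdeal R)] at e
  have := faithfullyFlat_adicCompletion R
  exact .localization_of_ringEquiv (.of_isWeaklyRegular hms hm') hrs e p hd

end Localization

/-! ### Comparison with the derived functor -/

section DerivedFunctor

open TensorProduct LinearMap Function

variable {R : Type u} [CommRing R] {M N X Y Z : Type u} [AddCommGroup M] [Module R M]
  [AddCommGroup N] [Module R N] [AddCommGroup X] [Module R X] [AddCommGroup Y] [Module R Y]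
  [AddCommGroup Z] [Module R Z]

variable (R M N) in
lemma exists_flat_resolution_tor :
    ∃ (P : ℕ → ModuleCat.{u} R) (d : ∀ n, P (n + 1) →ₗ[R] P n) (π : P 0 →ₗ[R] N),
      (∀ n, Module.Flat R (P n)) ∧ Surjective π ∧ Exact (d 0) π ∧
      (∀ n, Exact (d (n + 1)) (d n)) ∧
      ∀ i, ∃ f : M ⊗[R] P (i + 2) →ₗ[R] ker ((d i).lTensor M),
        (ker ((d i).lTensor M)).subtype ∘ₗ f = (d (i + 1)).lTensor M ∧
        Nonempty (TorM R (i + 1) M N ≃ₗ[R] ker ((d i).lTensor M) ⧸ range f) := by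
  let Pr : ProjectiveResolution (ModuleCat.of R N) := ProjectiveResolution.of _
  refine ⟨fun n ↦ Pr.complex.X n, fun n ↦ (Pr.complex.d (n + 1) n).hom, (Pr.π.f 0).hom,
    fun n ↦ ?_, (ModuleCat.epi_iff_surjective _).1 inferInstance,
    (ShortComplex.ShortExact.moduleCat_exact_iff_function_exact _).1 Pr.exact₀,
    fun n ↦ (ShortComplex.ShortExact.moduleCat_exact_iff_function_exact _).1 (Pr.exact_succ n),
    fun i ↦ ?_⟩
  · have : Module.Projective R (Pr.complex.X n) :=
      (IsProjective.iff_projective _).2 (Pr.projective n)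
    infer_instance
  · let F := (MonoidalCategory.tensoringLeft (ModuleCat.{u} R)).obj (ModuleCat.of R M)
    let C := (F.mapHomologicalComplex (ComplexShape.down ℕ)).obj Pr.complex
    let S := C.sc' (i + 2) (i + 1) i
    have eDerived : TorModCat R (i + 1) M N ≅ C.homology (i + 1) :=
      Pr.isoLeftDerivedObj F (i + 1)
    have eHomology : C.homology (i + 1) ≅ S.homology :=
      ShortComplex.homologyMapIso (C.isoSc' (i + 2) (i + 1) i (by simp) (by simp))
    exact ⟨S.moduleCatToCycles, rfl,
      ⟨(eDerived ≪≫ eHomology ≪≫ S.moduleCatHomologyIso).toLinearEquiv⟩⟩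

lemma exact_lTensor_iff_injective {f : X →ₗ[R] Y} {g : Y →ₗ[R] Z} (hfg : Exact f g) :
    Exact (f.lTensor M) (g.lTensor M) ↔ Injective ((range g).subtype.lTensor M) := by
  have hf : Exact f g.rangeRestrict := fun y ↦ by rw [← hfg y, Subtype.ext_iff]; rfl
  have hex := lTensor_exact M hf g.surjective_rangeRestrict
  have hsurj := lTensor_surjective M g.surjective_rangeRestrict
  have hg : g.lTensor M = (range g).subtype.lTensor M ∘ₗ g.rangeRestrict.lTensor M := by
    rw [← lTensor_comp, subtype_comp_codRestrict]
  rw [hg, injective_iff_map_eq_zero]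
  refine ⟨fun h z hz ↦ ?_, fun h y ↦ ?_⟩
  · obtain ⟨y, rfl⟩ := hsurj z
    exact (hex y).2 ((h y).1 hz)
  · rw [← hex y]
    exact ⟨h _, fun hy ↦ by rw [LinearMap.comp_apply, hy, map_zero]⟩

lemma TorVanishes.exact_lTensor_iff {P : ℕ → ModuleCat.{u} R}
    {d : ∀ n, P (n + 1) →ₗ[R] P n} {π : P 0 →ₗ[R] N} (hP : ∀ n, Module.Flat R (P n))
    (hπ : Surjective π) (hdπ : Exact (d 0) π) (hd : ∀ n, Exact (d (n + 1)) (d n)) (i : ℕ) :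
    Exact ((d (i + 1)).lTensor M) ((d i).lTensor M) ↔ TorVanishes R i M N := by
  induction i generalizing N P with
  | zero =>
    have := hP 0
    have hrange : Exact (range (d 0)).subtype π := exact_iff.1 hdπ ▸ exact_subtype_ker_map π
    rw [exact_lTensor_iff_injective (hd 0),
      zero_iff_lTensor_injective (range (d 0)).injective_subtype hrange hπ]
  | succ i ih =>
    have := hP 0
    have hrange : Exact (range (d 0)).subtype π := exact_iff.1 hdπ ▸ exact_subtype_ker_map π
    have hd0 : Exact (d 1) (d 0).rangeRestrict :=
      fun y ↦ by rw [← hd 0 y, Subtype.ext_iff]; rfl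
    rw [succ_iff_right i (range (d 0)).injective_subtype hrange hπ]
    exact ih (P := fun n ↦ P (n + 1)) (d := fun n ↦ d (n + 1)) (fun n ↦ hP (n + 1))
      (d 0).surjective_rangeRestrict hd0 (fun n ↦ hd (n + 1))

lemma subsingleton_lTensor_homology_iff {A : Type u} [AddCommGroup A] [Module R A] [Module.Flat R A]
    {f : X →ₗ[R] Y} {g : Y →ₗ[R] Z} {f' : X →ₗ[R] ker g} (hf : (ker g).subtype ∘ₗ f' = f) :
    Subsingleton (A ⊗[R] (ker g ⧸ range f')) ↔ Exact (f.lTensor A) (g.lTensor A) := by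
  have hker := Module.Flat.lTensor_exact A (exact_subtype_ker_map g)
  have hinj : Injective ((ker g).subtype.lTensor A) :=
    Module.Flat.lTensor_preserves_injective_linearMap _ (ker g).injective_subtype
  have hcoker := lTensor_exact A (exact_map_mkQ_range f') (Submodule.mkQ_surjective _)
  have hsurj := lTensor_surjective A (Submodule.mkQ_surjective (range f'))
  rw [← hf, lTensor_comp]
  refine ⟨fun _ y ↦ ?_, fun h ↦ subsingleton_of_forall_eq 0 fun z ↦ ?_⟩
  · rw [hker y]
    refine ⟨?_, fun ⟨x, hx⟩ ↦ ⟨_, hx⟩⟩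
    rintro ⟨z, rfl⟩
    obtain ⟨x, rfl⟩ := (hcoker z).1 (Subsingleton.elim _ _)
    exact ⟨x, rfl⟩
  · obtain ⟨z, rfl⟩ := hsurj z
    obtain ⟨x, hx⟩ := (h _).1 ((hker _).2 ⟨z, rfl⟩)
    exact (hcoker z).2 ⟨x, hinj hx⟩

lemma exact_lTensor_tensor_iff {A : Type u} [AddCommGroup A] [Module R A] (f : X →ₗ[R] Y)
    (g : Y →ₗ[R] Z) :
    Exact ((f.lTensor M).lTensor A) ((g.lTensor M).lTensor A) ↔
      Exact (f.lTensor (A ⊗[R] M)) (g.lTensor (A ⊗[R] M)) := by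
  refine Exact.iff_of_ladder_linearEquiv (e₁ := TensorProduct.assoc R A M X)
    (e₂ := TensorProduct.assoc R A M Y) (e₃ := TensorProduct.assoc R A M Z) ?_ ?_
  all_goals
    rw [lTensor_tensor]
    ext
    simp

variable (M N) in
lemma subsingleton_tensor_torM_iff (A : Type u) [CommRing A] [Algebra R A] [Module.Flat R A]
    (i : ℕ) : Subsingleton (A ⊗[R] TorM R (i + 1) M N) ↔
      TorVanishes A i (A ⊗[R] M) (A ⊗[R] N) := by
  obtain ⟨P, d, π, hP, hπ, hdπ, hd, htor⟩ := exists_flat_resolution_tor R M N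
  obtain ⟨f, hf, ⟨e⟩⟩ := htor i
  rw [(e.lTensor A).toEquiv.subsingleton_congr, subsingleton_lTensor_homology_iff hf,
    exact_lTensor_tensor_iff, TorVanishes.exact_lTensor_iff hP hπ hdπ hd]
  have : TorVanishes R i N (A ⊗[R] M) ↔ TorVanishes A i (A ⊗[R] N) (A ⊗[R] M) :=
    TorVanishes.iff_baseChange_left i fun j ↦ .of_flat_left j
  exact ⟨fun h ↦ (this.1 h.symm).symm, fun h ↦ (this.2 h.symm).symm⟩

variable (M N) in
lemma subsingleton_localizedModule_torM_iff (p : Ideal R) [p.IsPrime] (i : ℕ) :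
    Subsingleton (LocalizedModule p.primeCompl (TorM R (i + 1) M N)) ↔
      TorVanishes (Localization.AtPrime p) i (LocalizedModule p.primeCompl M)
        (LocalizedModule p.primeCompl N) := by
  let e (X : Type u) [AddCommGroup X] [Module R X] :
      (Localization.AtPrime p ⊗[R] X) ≃ₗ[Localization.AtPrime p] LocalizedModule p.primeCompl X :=
    (IsLocalizedModule.isBaseChange p.primeCompl (Localization.AtPrime p)
      (LocalizedModule.mkLinearMap p.primeCompl X)).equiv
  rw [← (e _).toEquiv.subsingleton_congr, subsingleton_tensor_torM_iff]
  exact ⟨fun h ↦ ((h.of_equiv (e M)).symm.of_equiv (e N)).symm,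
    fun h ↦ ((h.of_equiv (e M).symm).symm.of_equiv (e N).symm).symm⟩

end DerivedFunctor

/-! ### Depth and finite length -/

lemma exists_isWeaklyRegular_of_le_rdepth {A M : Type u} [CommRing A] [AddCommGroup M] [Module A M]
    {n : ℕ} (h : (n : ℕ∞) ≤ rdepth A M) :
    ∃ xs : List A, (∀ x ∈ xs, x ∈ nonunits A) ∧ IsWeaklyRegular M xs ∧ n ≤ xs.length := by
  cases n with
  | zero => exact ⟨[], by simp, .nil A M, le_rfl⟩
  | succ k =>
    have hk : (k : ℕ∞) < rdepth A M := (Nat.cast_lt.2 k.lt_succ_self).trans_le h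
    obtain ⟨_, ⟨xs, rfl, hx, hreg⟩, hlen⟩ := lt_sSup_iff.1 hk
    exact ⟨xs, hx, hreg, Nat.succ_le_of_lt (Nat.cast_lt.1 hlen)⟩

lemma subsingleton_localizedModule_of_isFiniteLength {R : Type u} [CommRing R] [IsLocalRing R]
    {p : Ideal R} [p.IsPrime] (hp : ¬ p.IsMaximal) {X : Type u} [AddCommGroup X] [Module R X]
    (hX : IsFiniteLength R X) : Subsingleton (LocalizedModule p.primeCompl X) := by
  obtain ⟨a, ha, hap⟩ : ∃ a ∈ IsLocalRing.maximalIdeal R, a ∉ p :=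
    SetLike.exists_of_lt <| (IsLocalRing.le_maximalIdeal Ideal.IsPrime.ne_top').lt_of_ne
      fun h ↦ hp (h ▸ inferInstance)
  rw [LocalizedModule.subsingleton_iff]
  induction hX with
  | of_subsingleton => exact fun x ↦ ⟨1, one_mem _, Subsingleton.elim _ _⟩
  | @of_simple_quotient X _ _ Y _ _ ih =>
    intro x
    have hmax : (Module.annihilator R (X ⧸ Y)).IsMaximal := IsSimpleModule.annihilator_isMaximal
    have haX : a ∈ Module.annihilator R (X ⧸ Y) := by rwa [IsLocalRing.eq_maximalIdeal hmax]
    have hax : a • x ∈ Y :=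
      (Submodule.Quotient.mk_eq_zero Y).1 (Module.mem_annihilator.1 haX (Submodule.Quotient.mk x))
    obtain ⟨s, hs, hsx⟩ := ih ⟨a • x, hax⟩
    exact ⟨s * a, mul_mem hs hap, by simpa [mul_smul] using congrArg Subtype.val hsx⟩

theorem IsCIRing.subsingleton_localizedModule_torM {R : Type u} [CommRing R] (hR : IsCIRing R)
    {M N : Type u} [AddCommGroup M] [Module R M] [Module.Finite R M]
    [AddCommGroup N] [Module R N] [Module.Finite R N] (p : Ideal R) [p.IsPrime]
    (h : ∀ᶠ i in Filter.atTop, Subsingleton (LocalizedModule p.primeCompl (TorM R i M N)))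
    {i : ℕ} (hi : 1 ≤ i)
    (hp : p.height < rdepth (Localization.AtPrime p) (LocalizedModule p.primeCompl M) + i) :
    Subsingleton (LocalizedModule p.primeCompl (TorM R i M N)) := by
  have := hR.1
  obtain ⟨i, rfl⟩ := Nat.exists_eq_add_of_le' hi
  obtain ⟨d, hd⟩ := ENat.ne_top_iff_exists.1 (Ideal.height_ne_top (I := p) Ideal.IsPrime.ne_top')
  have hdepth : ((d - i : ℕ) : ℕ∞) ≤
      rdepth (Localization.AtPrime p) (LocalizedModule p.primeCompl M) := by
    rw [← hd, Nat.cast_succ, ← add_assoc, ENat.natCast_lt_add_one_iff] at hp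
    rw [ENat.natCast_sub]
    exact tsub_le_iff_right.2 hp
  obtain ⟨xs, hx, hreg, hlen⟩ := exists_isWeaklyRegular_of_le_rdepth hdepth
  have hev : ∀ᶠ j in Filter.atTop, TorVanishes (Localization.AtPrime p) j
      (LocalizedModule p.primeCompl M) (LocalizedModule p.primeCompl N) :=
    ((Filter.tendsto_add_atTop_nat 1).eventually h).mono
      fun j ↦ (subsingleton_localizedModule_torM_iff M N p j).1
  exact (subsingleton_localizedModule_torM_iff M N p i).2 <|
    (hR.hasCIExtension_localization p hd.ge).torVanishes hx hreg (by lia) hev i le_rfl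

theorem stmt12_general (R : Type u) [CommRing R] (hR : IsCIRing R)
    (M N : Type u) [AddCommGroup M] [Module R M] [Module.Finite R M]
    [AddCommGroup N] [Module R N] [Module.Finite R N]
    (w : ℕ) (hS : SerreCond R M w)
    (hfl : ∃ n0 : ℕ, ∀ i ≥ n0, IsFiniteLength R (TorM R i M N))
    (p : Ideal R) [hp : p.IsPrime] (hpm : ¬ p.IsMaximal) (i : ℕ) (hi : i ≥ 1)
    (hht : Order.height (⟨p, hp⟩ : PrimeSpectrum R) < w + i) :
    Subsingleton (LocalizedModule p.primeCompl (TorM R i M N)) := by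
  obtain ⟨_, _, _⟩ := id hR
  rcases subsingleton_or_nontrivial (LocalizedModule p.primeCompl M) with _ | hMp
  · obtain ⟨i, rfl⟩ := Nat.exists_eq_add_of_le' hi
    exact (subsingleton_localizedModule_torM_iff M N p i).2 (.of_flat_left i)
  have hdepth := hS p hp hMp
  rw [← PrimeSpectrum.height_eq_orderHeight] at hht hdepth
  have hlt : p.height < p.height + i :=
    add_comm p.height _ ▸ ENat.lt_add_left (Ideal.height_ne_top hp.ne_top) (Nat.cast_pos.2 hi)
  refine hR.subsingleton_localizedModule_torM p ?_ hi ?_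
  · exact Filter.eventually_atTop.2
      (hfl.imp fun n hn j hj ↦ subsingleton_localizedModule_of_isFiniteLength hpm (hn j hj))
  · calc p.height < min (w + i : ℕ∞) (p.height + i) := lt_min hht hlt
      _ = min (w : ℕ∞) p.height + i := min_add_add_right ..
      _ ≤ _ := by gcongr

/-- over a complete intersection, with `M` satisfying `(S_w)` and `Tor` of
finite length eventually, `Tor_i(M,N)` vanishes after localizing at non-maximal primes of
height at most `w`. -/
theorem stmt12 (R : Type u) [CommRing R] (hR : IsCIRing R)
    (M N : Type u) [AddCommGroup M] [Module R M] [Module.Finite R M]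
    [AddCommGroup N] [Module R N] [Module.Finite R N]
    (w : ℕ) (hw : 0 < w) (hS : SerreCond R M w)
    (hfl : ∃ n0 : ℕ, ∀ i ≥ n0, IsFiniteLength R (TorM R i M N))
    (p : Ideal R) [hp : p.IsPrime] (hpm : ¬ p.IsMaximal)
    (hht : Order.height (⟨p, hp⟩ : PrimeSpectrum R) ≤ (w : ℕ∞)) :
    ∀ i ≥ 1, Subsingleton (LocalizedModule p.primeCompl (TorM R i M N)) :=
  fun i hi ↦ stmt12_general R hR M N w hS hfl p hpm i hi <|
    hht.trans_lt (mod_cast Nat.lt_add_of_pos_right hi)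

end
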